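/- arXiv:0710.1701 — 6 statements merged into one kernel-verified Lean document; each statement's English description precedes it below -/
import Mathlib

section
/- Let Φ be a measure of complexity on the probability distributions over a countable alphabet A, let 𝒫 be a preparation, and suppose Q* ∈ 𝒫 is robust for 𝒫 with level of robustness h < ∞. Then the game γ(Φ,𝒫) is in equilibrium: sup_{P ∈ 𝒫} inf_{Q ∈ M} Φ(P,Q) = inf_{Q ∈ M} sup_{P ∈ 𝒫} Φ(P,Q) = h < ∞. -/
open scoped ENNReal

/-- **Robustness lemma, part 2 (equilibrium).**
If `Φ` is a measure of complexity on the probability distributions over a countable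
alphabet `A`, `prep` is a preparation, and `Qs ∈ prep` is robust for `prep` with level of
robustness `h < ∞`, then the game `γ(Φ, prep)` is in equilibrium:
`sup_{P ∈ prep} inf_{Q} Φ(P,Q) = inf_{Q} sup_{P ∈ prep} Φ(P,Q) = h < ∞`. -/
theorem robust_equilibrium {A : Type*} [Countable A]
    (Φ : PMF A → PMF A → ℝ≥0∞)
    (hmin : ∀ P Q : PMF A, Φ P P ≤ Φ P Q)
    (hstrict : ∀ P Q : PMF A, Q ≠ P → Φ P Q = Φ P P → Φ P P = ⊤)
    (prep : Set (PMF A)) (hprep : prep.Nonempty)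
    (Qs : PMF A) (hQs : Qs ∈ prep)
    (h : ℝ≥0∞) (hh : h < ⊤)
    (hrob : ∀ P ∈ prep, Φ P Qs = h) :
    (⨆ P ∈ prep, ⨅ Q : PMF A, Φ P Q) = h ∧
    (⨅ Q : PMF A, ⨆ P ∈ prep, Φ P Q) = h := by
  have key : ∀ Q, h ≤ Φ Qs Q := fun Q => (hrob Qs hQs) ▸ hmin Qs Q
  refine ⟨le_antisymm ?_ ?_, le_antisymm ?_ ?_⟩
  · exact iSup₂_le fun P hP => (iInf_le _ Qs).trans (hrob P hP).le
  · exact le_iSup₂_of_le Qs hQs (le_iInf key)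
  · exact (iInf_le _ Qs).trans (iSup₂_le fun P hP => (hrob P hP).le)
  · exact le_iInf fun Q => le_iSup₂_of_le Qs hQs (key Q)
end

section
/- (MaxEnt calculus.) Let Φ(P,Q) = ξ_Q(Σ_{i∈A} p_i κ(q_i)) be a measure of complexity on the probability distributions over a countable alphabet A, where κ : [0,1] → [0,∞]. Suppose Q is a probability distribution and λ₀, λ₁,…,λ_k are real constants such that κ(q_i) = λ₀ + Σ_ν λ_ν f_ν(i) for all i ∈ A, and suppose that for each ν the series a_ν = Σ_{i∈A} q_i f_ν(i) converges absolutely. Then Q ∈ 𝒫_a, Q is the unique maximum-entropy distribution of 𝒫_a, the game γ(Φ,𝒫_a) is in equilibrium, and MaxEnt(Φ,𝒫_a) = ξ_Q(λ₀ + Σ_ν λ_ν a_ν) < ∞ (assuming this value is finite). -/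
open scoped ENNReal

/-- A probability mass function on the alphabet `A`, given by real point
probabilities. -/
def IsPMF {A : Type*} (P : A → ℝ) : Prop := (∀ i, 0 ≤ P i) ∧ HasSum P 1

/-- The natural preparation `𝒫_a` determined by the functions `f_ν` and the
prescribed (absolutely convergent) averages `a_ν`. -/
def NatPrep {A : Type*} {k : ℕ} (f : Fin k → A → ℝ) (a : Fin k → ℝ) : Set (A → ℝ) :=
  {P | IsPMF P ∧
    ∀ ν, Summable (fun i => |P i * f ν i|) ∧ HasSum (fun i => P i * f ν i) (a ν)}

/-- **MaxEnt calculus.**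
Let `Φ(P,Q) = ξ_Q (Σ_i p_i κ(q_i))` be a measure of complexity on the probability
distributions over a countable alphabet `A`.  Suppose `Q` is a probability
distribution and `λ₀, λ₁, …, λ_k` are real constants with
`κ(q_i) = λ₀ + Σ_ν λ_ν f_ν(i)` for all `i`, and suppose the averages
`a_ν = Σ_i q_i f_ν(i)` converge absolutely.  Then `Q ∈ 𝒫_a`, `Q` is the unique
maximum-entropy distribution of `𝒫_a`, the game `γ(Φ,𝒫_a)` is in equilibrium, and
`MaxEnt(Φ,𝒫_a) = ξ_Q(λ₀ + λ·a) < ∞` (assuming this value is finite). -/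
theorem maxent_calculus {A : Type*} [Countable A] {k : ℕ}
    (f : Fin k → A → ℝ) (κ : ℝ → ℝ≥0∞)
    (ξ : (A → ℝ) → ℝ≥0∞ → ℝ≥0∞)
    (Φ : (A → ℝ) → (A → ℝ) → ℝ≥0∞)
    (hΦ : ∀ P Q : A → ℝ, Φ P Q = ξ Q (∑' i, ENNReal.ofReal (P i) * κ (Q i)))
    (hmin : ∀ P Q : A → ℝ, IsPMF P → IsPMF Q → Φ P P ≤ Φ P Q)
    (hstrict : ∀ P Q : A → ℝ, IsPMF P → IsPMF Q → Q ≠ P → Φ P Q = Φ P P → Φ P P = ⊤)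
    (Q : A → ℝ) (hQ : IsPMF Q)
    (lam0 : ℝ) (lam : Fin k → ℝ)
    (hpos : ∀ i, 0 ≤ lam0 + ∑ ν, lam ν * f ν i)
    (hκQ : ∀ i, κ (Q i) = ENNReal.ofReal (lam0 + ∑ ν, lam ν * f ν i))
    (a : Fin k → ℝ)
    (ha : ∀ ν, Summable (fun i => |Q i * f ν i|) ∧ HasSum (fun i => Q i * f ν i) (a ν))
    (hfin : ξ Q (ENNReal.ofReal (lam0 + ∑ ν, lam ν * a ν)) ≠ ⊤) :
    Q ∈ NatPrep f a ∧
    Φ Q Q = ξ Q (ENNReal.ofReal (lam0 + ∑ ν, lam ν * a ν)) ∧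
    (∀ P ∈ NatPrep f a, P ≠ Q → Φ P P < Φ Q Q) ∧
    (⨆ P ∈ NatPrep f a, ⨅ Q' ∈ {R : A → ℝ | IsPMF R}, Φ P Q')
        = ξ Q (ENNReal.ofReal (lam0 + ∑ ν, lam ν * a ν)) ∧
    (⨅ Q' ∈ {R : A → ℝ | IsPMF R}, ⨆ P ∈ NatPrep f a, Φ P Q')
        = ξ Q (ENNReal.ofReal (lam0 + ∑ ν, lam ν * a ν)) ∧
    (⨆ P ∈ NatPrep f a, Φ P P) = ξ Q (ENNReal.ofReal (lam0 + ∑ ν, lam ν * a ν)) := by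
  have key : ∀ P ∈ NatPrep f a, Φ P Q = ξ Q (ENNReal.ofReal (lam0 + ∑ ν, lam ν * a ν)) := by
    rintro P ⟨⟨hP0, hP1⟩, hP⟩
    rw [hΦ]
    congr 1
    have hs : HasSum (fun i => P i * (lam0 + ∑ ν, lam ν * f ν i))
        (lam0 + ∑ ν, lam ν * a ν) := by
      have h1 : HasSum (fun i => lam0 * P i) (lam0 * 1) := hP1.mul_left lam0
      have h2 : HasSum (fun i => ∑ ν, lam ν * (P i * f ν i)) (∑ ν, lam ν * a ν) :=
        hasSum_sum (fun ν _ => (hP ν).2.mul_left (lam ν))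
      have h3 := h1.add h2
      rw [mul_one] at h3
      convert h3 using 2 with i
      rw [mul_add, Finset.mul_sum, mul_comm]
      congr 1
      exact Finset.sum_congr rfl (fun ν _ => by ring)
    rw [← hs.tsum_eq, ENNReal.ofReal_tsum_of_nonneg
      (fun i => mul_nonneg (hP0 i) (hpos i)) hs.summable]
    exact tsum_congr (fun i => by rw [hκQ, ENNReal.ofReal_mul (hP0 i)])
  have hQm : Q ∈ NatPrep f a := ⟨hQ, ha⟩
  have hQQ := key Q hQm
  have hle : ∀ P ∈ NatPrep f a, Φ P P ≤ ξ Q (ENNReal.ofReal (lam0 + ∑ ν, lam ν * a ν)) :=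
    fun P hP => (hmin P Q hP.1 hQ).trans_eq (key P hP)
  refine ⟨hQm, hQQ, ?_, ?_, ?_, ?_⟩
  · intro P hP hne
    rw [hQQ]
    refine lt_of_le_of_ne (hle P hP) (fun h => hfin ?_)
    rw [← h]
    exact hstrict P Q hP.1 hQ hne.symm ((key P hP).trans h.symm)
  · apply le_antisymm
    · exact iSup₂_le fun P hP => (iInf₂_le Q hQ).trans_eq (key P hP)
    · refine le_trans ?_ (le_iSup₂ (f := fun P (_ : P ∈ NatPrep f a) =>
        ⨅ Q' ∈ {R : A → ℝ | IsPMF R}, Φ P Q') Q hQm)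
      exact le_iInf₂ fun Q' hQ' => hQQ.symm.le.trans (hmin Q Q' hQ hQ')
  · apply le_antisymm
    · exact (iInf₂_le Q hQ).trans (iSup₂_le fun P hP => (key P hP).le)
    · refine le_iInf₂ fun Q' hQ' => (hQQ.symm.le.trans (hmin Q Q' hQ hQ')).trans ?_
      exact le_iSup₂ (f := fun P (_ : P ∈ NatPrep f a) => Φ P Q') Q hQm
  · apply le_antisymm
    · exact iSup₂_le hle
    · exact hQQ.symm.le.trans (le_iSup₂ (f := fun P (_ : P ∈ NatPrep f a) => Φ P P) Q hQm)
end

section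
/- Let h : [0,1] → ℝ be continuous on [0,1] and differentiable on (0,1) with h(1) = 0. Then the corrector ξ(x) = h(x) − x·(h'(x) + 1) vanishes identically on (0,1) if and only if h(x) = x·ln(1/x) for all x ∈ (0,1] (with h(0) = 0). That is, the correction term vanishes exactly in the classical Boltzmann–Gibbs–Shannon case. -/
/-- **The correction vanishes exactly in the classical BGS case.**
Let `h : [0,1] → ℝ` be continuous on `[0,1]` and differentiable on `(0,1)` with
`h 1 = 0`.  Then the corrector `ξ x = h x - x * (h' x + 1)` vanishes identically on
`(0,1)` if and only if `h x = x * ln (1/x)` for all `x ∈ (0,1]` (with `h 0 = 0`). -/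
theorem corrector_vanishes_iff_classical (h h' : ℝ → ℝ)
    (hcont : ContinuousOn h (Set.Icc 0 1))
    (hd : ∀ x ∈ Set.Ioo (0 : ℝ) 1, HasDerivAt h (h' x) x)
    (h1 : h 1 = 0) :
    (∀ x ∈ Set.Ioo (0 : ℝ) 1, h x - x * (h' x + 1) = 0) ↔
    ((∀ x ∈ Set.Ioc (0 : ℝ) 1, h x = x * Real.log (1 / x)) ∧ h 0 = 0) := by
  constructor
  · intro hx
    have key : ∀ x ∈ Set.Ioc (0 : ℝ) 1, h x = Real.negMulLog x := by
      intro x hx0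
      have hc : ContinuousOn (fun y => h y / y + Real.log y) (Set.Icc x 1) := by
        have hne : ∀ y ∈ Set.Icc x 1, y ≠ 0 := fun y hy => (lt_of_lt_of_le hx0.1 hy.1).ne'
        refine ContinuousOn.add (ContinuousOn.div ?_ continuousOn_id hne) ?_
        · exact hcont.mono (Set.Icc_subset_Icc_left hx0.1.le)
        · exact Real.continuousOn_log.mono hne
      have hconst := constant_of_has_deriv_right_zero hc (fun y hy => by
        have hy0 : 0 < y := lt_of_lt_of_le hx0.1 hy.1
        have hyI : y ∈ Set.Ioo (0 : ℝ) 1 := ⟨hy0, hy.2⟩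
        have hder := ((hd y hyI).div (hasDerivAt_id y) hy0.ne').add (Real.hasDerivAt_log hy0.ne')
        have he : (h' y * id y - h y * 1) / id y ^ 2 + y⁻¹ = 0 := by
          have h2 := hx y hyI
          have h3 : h y = y * (h' y + 1) := by linarith
          simp only [id, h3]
          field_simp
          ring
        rw [he] at hder
        exact hder.hasDerivWithinAt)
      have h4 := hconst 1 ⟨hx0.2, le_refl _⟩
      simp only [h1, Real.log_one, zero_div, add_zero] at h4
      have hxp := hx0.1.ne'
      have h5 : h x / x = -Real.log x := by linarith
      rw [div_eq_iff hxp] at h5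
      rw [h5, Real.negMulLog]
      ring
    refine ⟨fun x hx0 => ?_, ?_⟩
    · rw [key x hx0, Real.negMulLog, one_div, Real.log_inv]
      ring
    · have hE : Set.EqOn h Real.negMulLog (Set.Icc 0 1) :=
        Set.EqOn.of_subset_closure (s := Set.Ioc (0 : ℝ) 1) key hcont
          Real.continuous_negMulLog.continuousOn Set.Ioc_subset_Icc_self
          (by rw [closure_Ioc (by norm_num)])
      simpa using hE (Set.left_mem_Icc.2 zero_le_one)
  · rintro ⟨hh, -⟩ x hx
    have hev : h =ᶠ[nhds x] Real.negMulLog := by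
      filter_upwards [Ioo_mem_nhds hx.1 hx.2] with y hy
      rw [hh y ⟨hy.1, hy.2.le⟩, Real.negMulLog, one_div, Real.log_inv]
      ring
    have hu := (hd x hx).unique ((Real.hasDerivAt_negMulLog hx.1.ne').congr_of_eventuallyEq hev)
    rw [hev.eq_of_nhds, hu, Real.negMulLog]
    ring
end

section
/- For real parameters (α,β) with either 0 ≤ α < 1 and β ≤ 0, or α ≤ 0 and 0 ≤ β < 1, the function h_{α,β}(x) = x·ln_{α,β}(1/x) is a Bregman generator: h_{α,β} extends continuously to [0,1] with h_{α,β}(0) = h_{α,β}(1) = 0, its derivative satisfies h'_{α,β}(1) = −1, and h_{α,β} is strictly concave on (0,1] (equivalently, h''_{α,β}(x) < 0 for x ∈ (0,1)). -/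
/-- The Bregman generator `h_{α,β}(x) = x · ln_{α,β}(1/x)` built from the deformed
logarithm `ln_{α,β} y = (y^β - y^α)/(β - α)` (for `α ≠ β`) and
`ln_{α,α} y = y^α · ln y`.  Thus for `α ≠ β`,
`h_{α,β}(x) = (x^(1-β) - x^(1-α))/(β - α)`, and `h_{α,α}(x) = x^(1-α) · ln (1/x)`. -/
noncomputable def habGen (α β : ℝ) : ℝ → ℝ := fun x =>
  if α = β then x ^ (1 - α) * Real.log (1 / x)
  else (x ^ (1 - β) - x ^ (1 - α)) / (β - α)

theorem habGen_symm (α β : ℝ) : habGen α β = habGen β α := by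
  funext x
  unfold habGen
  by_cases h : α = β
  · subst h; rfl
  · rw [if_neg h, if_neg (Ne.symm h), ← neg_sub (x ^ (1 - α)), ← neg_sub α β, neg_div_neg_eq]

theorem habGen_aux (α β : ℝ) (h0 : 0 ≤ α) (h1 : α < 1) (hb : β ≤ 0) :
    ContinuousOn (habGen α β) (Set.Icc 0 1) ∧
    habGen α β 0 = 0 ∧
    habGen α β 1 = 0 ∧
    HasDerivWithinAt (habGen α β) (-1) (Set.Icc 0 1) 1 ∧
    StrictConcaveOn ℝ (Set.Ioc 0 1) (habGen α β) := by
  have hsub : Set.Ioc (0 : ℝ) 1 ⊆ Set.Ici 0 := fun x hx => hx.1.le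
  by_cases h : α = β
  · have ha : α = 0 := by linarith
    have hb0 : β = 0 := by linarith
    subst ha
    subst hb0
    have he : habGen 0 0 = Real.negMulLog := by
      funext x
      simp [habGen, Real.negMulLog]
    rw [he]
    refine ⟨Real.continuous_negMulLog.continuousOn, by simp, by simp, ?_,
      Real.strictConcaveOn_negMulLog.subset hsub (convex_Ioc 0 1)⟩
    have := (Real.hasDerivAt_negMulLog (x := 1) one_ne_zero).hasDerivWithinAt (s := Set.Icc 0 1)
    simpa using this
  · have hlt : β < α := lt_of_le_of_ne (hb.trans h0) (Ne.symm h)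
    have hne : α - β ≠ 0 := by linarith
    have he : habGen α β = fun x => (α - β)⁻¹ • (x ^ (1 - α) - x ^ (1 - β)) := by
      funext x
      rw [habGen_symm]
      simp only [habGen, if_neg (Ne.symm h), smul_eq_mul]
      rw [div_eq_inv_mul]
    have hd : HasDerivAt (habGen α β) (-1) 1 := by
      rw [he]
      have e1 := Real.hasDerivAt_rpow_const (x := 1) (p := 1 - α) (Or.inl one_ne_zero)
      have e2 := Real.hasDerivAt_rpow_const (x := 1) (p := 1 - β) (Or.inl one_ne_zero)
      refine HasDerivAt.congr_deriv ((e1.sub e2).const_smul (α - β)⁻¹) ?_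
      simp only [Real.one_rpow, smul_eq_mul]
      field_simp
      ring
    refine ⟨?_, ?_, ?_, hd.hasDerivWithinAt, ?_⟩
    · rw [he]
      apply Continuous.continuousOn
      exact ((Real.continuous_rpow_const (q := 1 - α) (by linarith)).sub
        (Real.continuous_rpow_const (q := 1 - β) (by linarith))).const_smul (α - β)⁻¹
    · rw [he]
      simp [Real.zero_rpow (show 1 - α ≠ 0 by linarith),
        Real.zero_rpow (show 1 - β ≠ 0 by linarith)]
    · rw [he]; simp
    · have hs : StrictConcaveOn ℝ (Set.Ici 0) (fun x : ℝ => x ^ (1 - α) - x ^ (1 - β)) := by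
        rcases h0.lt_or_eq with ha | ha
        · exact (Real.strictConcaveOn_rpow (by linarith) (by linarith)).sub_convexOn
            (convexOn_rpow (by linarith))
        · exact (Real.concaveOn_rpow (by linarith) (by linarith)).sub_strictConvexOn
            (strictConvexOn_rpow (by linarith))
      have hs := hs.subset hsub (convex_Ioc 0 1)
      have hc : 0 < (α - β)⁻¹ := inv_pos.2 (by linarith)
      rw [he]
      refine ⟨hs.1, fun x hx y hy hxy a b ha hb' hab => ?_⟩
      have := mul_lt_mul_of_pos_left (hs.2 hx hy hxy ha hb' hab) hc
      simp only [smul_eq_mul] at this ⊢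
      linarith

/-- **The deformed logarithms give Bregman generators.**
For real parameters `(α,β)` with either `0 ≤ α < 1` and `β ≤ 0`, or `α ≤ 0` and
`0 ≤ β < 1`, the function `h_{α,β}(x) = x · ln_{α,β}(1/x)` is a Bregman generator:
it is continuous on `[0,1]` with `h_{α,β}(0) = h_{α,β}(1) = 0`, its (one-sided)
derivative at `1` equals `-1`, and it is strictly concave on `(0,1]`. -/
theorem habGen_is_bregman_generator (α β : ℝ)
    (hpar : (0 ≤ α ∧ α < 1 ∧ β ≤ 0) ∨ (α ≤ 0 ∧ 0 ≤ β ∧ β < 1)) :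
    ContinuousOn (habGen α β) (Set.Icc 0 1) ∧
    habGen α β 0 = 0 ∧
    habGen α β 1 = 0 ∧
    HasDerivWithinAt (habGen α β) (-1) (Set.Icc 0 1) 1 ∧
    StrictConcaveOn ℝ (Set.Ioc 0 1) (habGen α β) := by
  rcases hpar with ⟨h0, h1, hb⟩ | ⟨ha, h0, h1⟩
  · exact habGen_aux α β h0 h1 hb
  · rw [habGen_symm]
    exact habGen_aux β α h0 h1 ha
end

section
/- Let A be a finite alphabet, q > 0 with q ≠ 1, and let P = (p_i), Q = (q_i) be probability distributions on A with q_i > 0 for all i. Then the Bregman complexity Φ^B(P,Q) = 1/(q−1) + Σ_i ( q_i^q − (q/(q−1))·p_i·q_i^{q−1} ) satisfies Φ^B(P,Q) ≥ S_q(P), with equality if and only if P = Q. Hence Tsallis entropy S_q arises as minimal Bregman complexity: inf_Q Φ^B(P,Q) = Φ^B(P,P) = S_q(P). -/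
open Finset

theorem tsallis_aux_pos (q : ℝ) (hq0 : 0 < q) (hq1 : q ≠ 1) (t : ℝ) (ht : 0 ≤ t) (ht1 : t ≠ 1) :
    0 < (t ^ q - 1 - q * (t - 1)) / (q - 1) := by
  have e : 1 + (t - 1) = t := by ring
  rcases lt_or_gt_of_ne hq1 with h | h
  · have := rpow_one_add_lt_one_add_mul_self (s := t - 1) (by linarith)
      (sub_ne_zero.mpr ht1) hq0 h
    rw [e] at this
    exact div_pos_of_neg_of_neg (by linarith) (by linarith)
  · have := one_add_mul_self_lt_rpow_one_add (s := t - 1) (by linarith)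
      (sub_ne_zero.mpr ht1) h
    rw [e] at this
    exact div_pos (by linarith) (by linarith)

theorem tsallis_mul_rpow (q : ℝ) (hq0 : 0 < q) (p : ℝ) (hp : 0 ≤ p) :
    p * p ^ (q - 1) = p ^ q := by
  rcases hp.eq_or_lt with h | h
  · rw [← h, Real.zero_rpow hq0.ne', zero_mul]
  · rw [Real.rpow_sub_one h.ne']
    field_simp

theorem tsallis_pt_self (q : ℝ) (hq0 : 0 < q) (hq1 : q ≠ 1) (p : ℝ) (hp : 0 ≤ p) :
    p ^ q - q / (q - 1) * p * p ^ (q - 1) + p ^ q / (q - 1) = 0 := by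
  have hq : q - 1 ≠ 0 := sub_ne_zero.mpr hq1
  rw [mul_assoc, tsallis_mul_rpow q hq0 p hp]
  field_simp
  ring

theorem tsallis_pt_pos (q : ℝ) (hq0 : 0 < q) (hq1 : q ≠ 1) (p x : ℝ) (hp : 0 ≤ p) (hx : 0 < x)
    (hne : p ≠ x) :
    0 < x ^ q - q / (q - 1) * p * x ^ (q - 1) + p ^ q / (q - 1) := by
  have hq : q - 1 ≠ 0 := sub_ne_zero.mpr hq1
  have hxq : 0 < x ^ q := Real.rpow_pos_of_pos hx q
  have key := mul_pos hxq (tsallis_aux_pos q hq0 hq1 (p / x) (by positivity)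
    (fun h => hne ((div_eq_one_iff_eq hx.ne').mp h)))
  rw [Real.div_rpow hp hx.le] at key
  rw [Real.rpow_sub_one hx.ne']
  refine lt_of_lt_of_eq key ?_
  field_simp
  ring

theorem tsallis_pt_nonneg (q : ℝ) (hq0 : 0 < q) (hq1 : q ≠ 1) (p x : ℝ) (hp : 0 ≤ p)
    (hx : 0 < x) :
    0 ≤ x ^ q - q / (q - 1) * p * x ^ (q - 1) + p ^ q / (q - 1) := by
  by_cases h : p = x
  · subst h
    exact (tsallis_pt_self q hq0 hq1 p hp).ge
  · exact (tsallis_pt_pos q hq0 hq1 p x hp hx h).le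

/-- **Tsallis entropy as minimal Bregman complexity.**
Let `A` be a finite alphabet, `q > 0`, `q ≠ 1`, and let `P, Q` be probability
distributions on `A` with `q_i > 0` for all `i`.  Then the Bregman complexity
`Φ^B(P,Q) = 1/(q-1) + Σ_i (q_i^q - (q/(q-1)) p_i q_i^(q-1))` satisfies
`Φ^B(P,Q) ≥ S_q(P)`, with equality iff `P = Q`, and `Φ^B(P,P) = S_q(P)`, where
`S_q(P) = (1 - Σ_i p_i^q)/(q-1)` is the Tsallis entropy. -/
theorem tsallis_minimal_bregman_complexity {A : Type*} [Fintype A]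
    (q : ℝ) (hq0 : 0 < q) (hq1 : q ≠ 1)
    (P Q : A → ℝ)
    (hP0 : ∀ i, 0 ≤ P i) (hP1 : ∑ i, P i = 1)
    (hQ0 : ∀ i, 0 < Q i) (hQ1 : ∑ i, Q i = 1) :
    (1 - ∑ i, P i ^ q) / (q - 1)
        ≤ 1 / (q - 1) + ∑ i, (Q i ^ q - q / (q - 1) * P i * Q i ^ (q - 1)) ∧
    (1 / (q - 1) + ∑ i, (Q i ^ q - q / (q - 1) * P i * Q i ^ (q - 1))
        = (1 - ∑ i, P i ^ q) / (q - 1) ↔ P = Q) ∧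
    1 / (q - 1) + ∑ i, (P i ^ q - q / (q - 1) * P i * P i ^ (q - 1))
        = (1 - ∑ i, P i ^ q) / (q - 1) := by
  have hsum : ∀ R : A → ℝ, 1 / (q - 1) + ∑ i, (R i ^ q - q / (q - 1) * P i * R i ^ (q - 1))
      = (1 - ∑ i, P i ^ q) / (q - 1)
        + ∑ i, (R i ^ q - q / (q - 1) * P i * R i ^ (q - 1) + P i ^ q / (q - 1)) := by
    intro R
    rw [Finset.sum_add_distrib, ← Finset.sum_div]
    ring
  have hself : 1 / (q - 1) + ∑ i, (P i ^ q - q / (q - 1) * P i * P i ^ (q - 1))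
      = (1 - ∑ i, P i ^ q) / (q - 1) := by
    rw [hsum P, Finset.sum_eq_zero (fun i _ => tsallis_pt_self q hq0 hq1 (P i) (hP0 i)), add_zero]
  have hnn : ∀ i ∈ Finset.univ, 0 ≤ Q i ^ q - q / (q - 1) * P i * Q i ^ (q - 1)
      + P i ^ q / (q - 1) :=
    fun i _ => tsallis_pt_nonneg q hq0 hq1 (P i) (Q i) (hP0 i) (hQ0 i)
  refine ⟨?_, ⟨fun h => ?_, fun h => ?_⟩, hself⟩
  · rw [hsum Q]
    exact le_add_of_nonneg_right (Finset.sum_nonneg hnn)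
  · rw [hsum Q, add_eq_left, Finset.sum_eq_zero_iff_of_nonneg hnn] at h
    funext i
    by_contra hne
    exact (tsallis_pt_pos q hq0 hq1 (P i) (Q i) (hP0 i) (hQ0 i) hne).ne' (h i (Finset.mem_univ i))
  · rw [← h]
    exact hself
end

section
/- Let A be a finite alphabet, q > 0 with q ≠ 1, and let P = (p_i), Q = (q_i) be probability distributions on A with q_i > 0 for all i. Then the Csiszár complexity Φ^C(P,Q) = (1/(1−q))·Σ_i p_i^q·(1 − q_i^{1−q}) satisfies Φ^C(P,Q) ≥ S_q(P), with equality if and only if P = Q. Hence Tsallis entropy S_q also arises as minimal Csiszár complexity: inf_Q Φ^C(P,Q) = Φ^C(P,P) = S_q(P). -/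
open Finset

lemma aux_pt (q : ℝ) (hq0 : 0 < q) (hq1 : q ≠ 1) (p r : ℝ) (hp : 0 ≤ p) (hr : 0 < r) (hne : p ≠ r) :
    0 < 1 / (1 - q) * (r + q * (p - r) - p ^ q * r ^ (1 - q)) := by
  have e : p ^ q * r ^ (1 - q) = r * (1 + (p / r - 1)) ^ q := by
    rw [add_sub_cancel, Real.div_rpow hp hr.le, Real.rpow_sub hr, Real.rpow_one]
    ring
  have e2 : r + q * (p - r) = r * (1 + q * (p / r - 1)) := by
    field_simp
  have h1 : -1 ≤ p / r - 1 := by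
    have := div_nonneg hp hr.le
    linarith
  have h2 : p / r - 1 ≠ 0 := by
    intro h
    apply hne
    have : p / r = 1 := by linarith
    field_simp at this
    exact this
  rw [e, e2, ← mul_sub]
  rcases lt_or_gt_of_ne hq1 with h | h
  · have := rpow_one_add_lt_one_add_mul_self h1 h2 hq0 h
    exact mul_pos (one_div_pos.2 (by linarith)) (mul_pos hr (by linarith))
  · have := one_add_mul_self_lt_rpow_one_add h1 h2 h
    exact mul_pos_of_neg_of_neg (one_div_neg.2 (by linarith))
      (mul_neg_of_pos_of_neg hr (by linarith))

lemma aux_self (q : ℝ) (hq0 : 0 < q) (p : ℝ) (hp : 0 ≤ p) : p ^ q * p ^ (1 - q) = p := by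
  rcases hp.eq_or_lt with h | h
  · rw [← h, Real.zero_rpow hq0.ne', zero_mul]
  · rw [← Real.rpow_add h, add_sub_cancel, Real.rpow_one]

/-- **Tsallis entropy as minimal Csiszár complexity.**
Let `A` be a finite alphabet, `q > 0`, `q ≠ 1`, and let `P, Q` be probability
distributions on `A` with `q_i > 0` for all `i`.  Then the Csiszár complexity
`Φ^C(P,Q) = (1/(1-q)) Σ_i p_i^q (1 - q_i^(1-q))` satisfies `Φ^C(P,Q) ≥ S_q(P)`,
with equality iff `P = Q`, and `Φ^C(P,P) = S_q(P)`, where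
`S_q(P) = (1 - Σ_i p_i^q)/(q-1)` is the Tsallis entropy. -/
theorem tsallis_minimal_csiszar_complexity {A : Type*} [Fintype A]
    (q : ℝ) (hq0 : 0 < q) (hq1 : q ≠ 1)
    (P Q : A → ℝ)
    (hP0 : ∀ i, 0 ≤ P i) (hP1 : ∑ i, P i = 1)
    (hQ0 : ∀ i, 0 < Q i) (hQ1 : ∑ i, Q i = 1) :
    (1 - ∑ i, P i ^ q) / (q - 1)
        ≤ 1 / (1 - q) * ∑ i, P i ^ q * (1 - Q i ^ (1 - q)) ∧
    (1 / (1 - q) * ∑ i, P i ^ q * (1 - Q i ^ (1 - q))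
        = (1 - ∑ i, P i ^ q) / (q - 1) ↔ P = Q) ∧
    1 / (1 - q) * ∑ i, P i ^ q * (1 - P i ^ (1 - q))
        = (1 - ∑ i, P i ^ q) / (q - 1) := by
  have hq : 1 - q ≠ 0 := sub_ne_zero.2 hq1.symm
  have hq' : q - 1 ≠ 0 := sub_ne_zero.2 hq1
  have self : 1 / (1 - q) * ∑ i, P i ^ q * (1 - P i ^ (1 - q))
        = (1 - ∑ i, P i ^ q) / (q - 1) := by
    have : ∑ i, P i ^ q * (1 - P i ^ (1 - q)) = ∑ i, P i ^ q - ∑ i, P i := by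
      rw [← Finset.sum_sub_distrib]
      refine Finset.sum_congr rfl fun i _ => ?_
      rw [mul_sub, aux_self q hq0 _ (hP0 i), mul_one]
    rw [this, hP1, ← neg_sub q 1, one_div, inv_neg]
    ring
  have key : 1 / (1 - q) * ∑ i, P i ^ q * (1 - Q i ^ (1 - q)) - (1 - ∑ i, P i ^ q) / (q - 1)
      = ∑ i, 1 / (1 - q) * (Q i + q * (P i - Q i) - P i ^ q * Q i ^ (1 - q)) := by
    rw [← Finset.mul_sum]
    simp only [mul_sub, mul_one, Finset.sum_sub_distrib, Finset.sum_add_distrib,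
      ← Finset.mul_sum, hP1, hQ1]
    rw [← neg_sub 1 q, div_neg]
    ring
  have nn : ∀ i ∈ Finset.univ,
      0 ≤ 1 / (1 - q) * (Q i + q * (P i - Q i) - P i ^ q * Q i ^ (1 - q)) := by
    intro i _
    by_cases h : P i = Q i
    · rw [h, aux_self q hq0 _ (hQ0 i).le]; simp
    · exact (aux_pt q hq0 hq1 _ _ (hP0 i) (hQ0 i) h).le
  refine ⟨?_, ⟨fun h => ?_, fun h => ?_⟩, self⟩
  · have := Finset.sum_nonneg nn
    linarith
  · rw [h, sub_self] at key
    funext i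
    by_contra hne
    have h0 := (Finset.sum_eq_zero_iff_of_nonneg nn).1 key.symm i (Finset.mem_univ i)
    exact (aux_pt q hq0 hq1 _ _ (hP0 i) (hQ0 i) hne).ne' h0
  · rw [← h]; exact self
end
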